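/- Let $A$ be a unique factorization domain and let $I$ be an ideal of $A$ that is not contained in any prime ideal of $A$ of height $1$. Then for every nonzero element $f \in A$ there exists $g \in I$ such that $f$ and $g$ are relatively prime. -/

import Mathlib

/-- A prime ideal `P` of `A` has height one if its height, as an element of the
prime spectrum of `A`, equals `1`. -/
def Ideal.HeightOne {A : Type*} [CommRing A] (P : Ideal A) (hP : P.IsPrime) : Prop :=
  Order.height (⟨P, hP⟩ : PrimeSpectrum A) = 1

/-- In a unique factorization domain, a prime element generates a prime ideal of height one. -/
theorem Ideal.heightOne_span_singleton {A : Type*} [CommRing A] [IsDomain A]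
    [UniqueFactorizationMonoid A] {p : A} (hp : Prime p) :
    (Ideal.span {p}).HeightOne ((Ideal.span_singleton_prime hp.ne_zero).2 hp) := by
  refine le_antisymm ?_ ?_
  · refine (Order.height_le_coe_iff (n := 1)).2 fun q hq => ?_
    have hlt : q.asIdeal < Ideal.span {p} := hq
    suffices h : q = ⊥ by simp [h]
    by_contra hne
    have hbot : q.asIdeal ≠ ⊥ := fun h => hne (PrimeSpectrum.ext h)
    obtain ⟨r, hrq, hr⟩ := q.isPrime.exists_mem_prime_of_ne_bot hbot
    have hpr : p ∣ r := Ideal.mem_span_singleton.1 (hlt.le hrq)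
    have hrp : r ∣ p := (hp.associated_of_dvd hr hpr).symm.dvd
    exact hlt.not_ge ((Ideal.span_singleton_le_iff_mem _).2 (q.asIdeal.mem_of_dvd hrp hrq))
  · rw [Order.one_le_iff_pos, Order.height_pos, isMin_iff_eq_bot]
    intro h
    exact hp.ne_zero (Ideal.span_singleton_eq_bot.1 (congrArg PrimeSpectrum.asIdeal h))

/-- Let `A` be a UFD and `I` an ideal of `A` not contained in any height one prime ideal.
Then for every nonzero `f ∈ A` there exists `g ∈ I` such that `f` and `g` are
relatively prime. -/
theorem exists_relPrime_of_not_le_height_one_prime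
    {A : Type*} [CommRing A] [IsDomain A] [UniqueFactorizationMonoid A]
    (I : Ideal A) (hI : ∀ (P : Ideal A) (hP : P.IsPrime), P.HeightOne hP → ¬ I ≤ P) :
    ∀ f : A, f ≠ 0 → ∃ g ∈ I, IsRelPrime f g := by
  intro f hf
  by_contra! hcop
  have hprime : ∀ p ∈ UniqueFactorizationMonoid.factors f, Prime p :=
    fun p hp => UniqueFactorizationMonoid.prime_of_factor p hp
  obtain ⟨p, hp, hIp⟩ := (I.subset_union_prime_finite
      (UniqueFactorizationMonoid.factors f).finite_toSet (f := fun p => Ideal.span {p}) 0 0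
      fun p hp _ _ => (Ideal.span_singleton_prime (hprime p hp).ne_zero).2 (hprime p hp)).1 <| by
    intro g hg
    have hnot := hcop g hg
    rw [UniqueFactorizationMonoid.isRelPrime_iff_no_prime_factors hf] at hnot
    push Not at hnot
    obtain ⟨d, hdf, hdg, hd⟩ := hnot
    obtain ⟨p, hp, hdp⟩ :=
      UniqueFactorizationMonoid.exists_mem_factors_of_dvd hf hd.irreducible hdf
    exact Set.mem_biUnion hp (Ideal.mem_span_singleton.2 (hdp.symm.dvd.trans hdg))
  exact hI _ _ (Ideal.heightOne_span_singleton (hprime p hp)) hIp
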